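/- Let s ≠ t be real numbers with α = min{s, t}, and define z_{s,t}(x) = (Γ(x+t)/Γ(x+s))^{1/(t-s)} - x for x ∈ (-α, ∞). If 0 < |t - s| < 1 then z_{s,t} is convex and decreasing on (-α, ∞), and if |t - s| > 1 then z_{s,t} is concave and increasing on (-α, ∞). (Elezović–Giordano–Pečarić's theorem.) -/

import Mathlib

open Real

/-!
Put `ψ = (log ∘ Γ)'`, `u = x + s` and `v = x + t`, and write `f[u, v]` for the slope of `f` between
`u` and `v`. Then `G x = (Γ v / Γ u) ^ (1 / (t - s))` equals `exp ((log ∘ Γ)[u, v])`, so that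
`G' = G * ψ[u, v]` and `G'' = G * (ψ[u, v] ^ 2 + ψ'[u, v])`. The last factor tends to zero at
infinity, and by the recurrences of `ψ` and `ψ'` its decrement along `x ↦ x + 1` is
`(2 * ψ[u, v] - (u + v + 1) / (u * v)) / (u * v)`. The numerator again tends to zero, and its
decrement is `(1 - (t - s) ^ 2) / (u * v * (u + 1) * (v + 1))`. Hence `G''` has the sign of
`1 - (t - s) ^ 2` throughout. Finally, convexity of `log ∘ Γ` bounds `G x - x` above when
`|t - s| ≤ 1` and below when `|t - s| ≥ 1`, and a strictly convex function that is bounded above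
on an upper half-line is strictly decreasing; dually for strictly concave functions.
-/

section

open Filter Set Topology

section Convexity

variable {𝕜 : Type*} [Field 𝕜] [LinearOrder 𝕜] [IsStrictOrderedRing 𝕜] {s : Set 𝕜} {f : 𝕜 → 𝕜}

lemma antitoneOn_of_convexOn_of_bddAbove (hs : IsUpperSet s) (hf : ConvexOn 𝕜 s f)
    (hb : BddAbove (f '' s)) : AntitoneOn f s := by
  obtain ⟨B, hB⟩ := hb
  intro x hx y hy hxy
  by_contra! hfxy
  have hxy' : x < y := hxy.lt_of_ne fun h => hfxy.ne (congrArg f h)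
  have hslope : 0 < slope f x y := (slope_pos_iff_of_le hxy).2 hfxy
  -- At `w` the secant line through `x` and `y` reaches the height `B + f y - f x > B`.
  set w : 𝕜 := y + (B - f x) / slope f x y
  have hBx : f x ≤ B := hB (mem_image_of_mem f hx)
  have hyw : y ≤ w := le_add_of_nonneg_right (div_nonneg (sub_nonneg.2 hBx) hslope.le)
  have hw : w ∈ s := hs hyw hy
  have hxw : x < w := hxy'.trans_le hyw
  have hsecant : slope f x y * (w - x) ≤ f w - f x := by
    rw [← le_div_iff₀ (sub_pos.2 hxw), ← slope_def_field]
    exact hf.slope_mono hx ⟨hy, hxy'.ne'⟩ ⟨hw, hxw.ne'⟩ hyw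
  have hheight : slope f x y * (w - x) = f y - f x + (B - f x) := by
    have h := sub_smul_slope f x y
    rw [smul_eq_mul, vsub_eq_sub] at h
    rw [← h, ← mul_div_cancel₀ (B - f x) hslope.ne']
    simp only [w]
    ring
  have hBw : f w ≤ B := hB (mem_image_of_mem f hw)
  linarith

lemma strictAntiOn_of_strictConvexOn_of_bddAbove (hs : IsUpperSet s) (hf : StrictConvexOn 𝕜 s f)
    (hb : BddAbove (f '' s)) : StrictAntiOn f s := by
  have hanti := antitoneOn_of_convexOn_of_bddAbove hs hf.convexOn hb
  intro x hx y hy hxy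
  refine (hanti hx hy hxy.le).lt_of_ne fun heq => ?_
  obtain ⟨z, hxz, hzy⟩ := exists_between hxy
  have hz : z ∈ openSegment 𝕜 x y := by
    rw [openSegment_eq_Ioo hxy]
    exact ⟨hxz, hzy⟩
  have hlt := hf.lt_on_openSegment hx hy hxy.ne hz
  rw [heq, max_self] at hlt
  exact hlt.not_ge (heq ▸ hanti (hs hxz.le hx) hy hzy.le)

lemma strictMonoOn_of_strictConcaveOn_of_bddBelow (hs : IsUpperSet s) (hf : StrictConcaveOn 𝕜 s f)
    (hb : BddBelow (f '' s)) : StrictMonoOn f s := by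
  have hb' : BddAbove ((-f) '' s) := by
    obtain ⟨B, hB⟩ := hb
    exact ⟨-B, forall_mem_image.2 fun x hx => neg_le_neg (hB (mem_image_of_mem f hx))⟩
  simpa using (strictAntiOn_of_strictConvexOn_of_bddAbove hs hf.neg hb').neg

end Convexity

lemma strictConvexOn_of_hasDerivAt2_pos {D : Set ℝ} (hD : Convex ℝ D) (hDo : IsOpen D)
    {f f' f'' : ℝ → ℝ} (hf : ∀ x ∈ D, HasDerivAt f (f' x) x)
    (hf' : ∀ x ∈ D, HasDerivAt f' (f'' x) x) (hpos : ∀ x ∈ D, 0 < f'' x) :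
    StrictConvexOn ℝ D f := by
  refine strictConvexOn_of_deriv2_pos' hD
    (fun x hx => (hf x hx).continuousAt.continuousWithinAt) fun x hx => ?_
  have hderiv : deriv f =ᶠ[𝓝 x] f' := by
    filter_upwards [hDo.mem_nhds hx] with y hy using (hf y hy).deriv
  rw [Function.iterate_succ_apply, Function.iterate_one, hderiv.deriv_eq, (hf' x hx).deriv]
  exact hpos x hx

lemma strictConcaveOn_of_hasDerivAt2_neg {D : Set ℝ} (hD : Convex ℝ D) (hDo : IsOpen D)
    {f f' f'' : ℝ → ℝ} (hf : ∀ x ∈ D, HasDerivAt f (f' x) x)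
    (hf' : ∀ x ∈ D, HasDerivAt f' (f'' x) x) (hneg : ∀ x ∈ D, f'' x < 0) :
    StrictConcaveOn ℝ D f :=
  neg_strictConvexOn_iff.1 <| strictConvexOn_of_hasDerivAt2_pos hD hDo
    (fun x hx => (hf x hx).neg) (fun x hx => (hf' x hx).neg) fun x hx => neg_pos.2 (hneg x hx)

lemma lt_of_tendsto_of_add_one_lt {f : ℝ → ℝ} {l x : ℝ} (hstep : ∀ y, x ≤ y → f (y + 1) < f y)
    (hlim : Tendsto f atTop (𝓝 l)) : l < f x := by
  have hanti : StrictAnti fun n : ℕ => f (x + n) := strictAnti_nat_of_succ_lt fun n => by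
    rw [Nat.cast_succ, ← add_assoc]
    exact hstep _ (le_add_of_nonneg_right n.cast_nonneg)
  have hseq : Tendsto (fun n : ℕ => f (x + n)) atTop (𝓝 l) :=
    hlim.comp (tendsto_atTop_add_const_left _ _ tendsto_natCast_atTop_atTop)
  calc l ≤ f (x + (1 : ℕ)) := hanti.antitone.le_of_tendsto hseq 1
    _ < f (x + (0 : ℕ)) := hanti zero_lt_one
    _ = f x := by rw [Nat.cast_zero, add_zero]

lemma hasDerivAt_slope_add {f f' : ℝ → ℝ} {s t x : ℝ} (hs : HasDerivAt f (f' (x + s)) (x + s))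
    (ht : HasDerivAt f (f' (x + t)) (x + t)) :
    HasDerivAt (fun y => slope f (y + s) (y + t)) (slope f' (x + s) (x + t)) x := by
  simp only [slope_def_field, add_sub_add_left_eq_sub]
  exact ((ht.comp_add_const x t).sub (hs.comp_add_const x s)).div_const (t - s)

/-- The real digamma function `ψ`, the logarithmic derivative of `Γ`, in analogy with
`Complex.digamma`. -/
noncomputable def digamma : ℝ → ℝ := logDeriv Gamma

/-- The trigamma function `ψ'`, encoded by its series. At the poles `0, -1, -2, …` the undefined
term of the series is read as zero. -/
noncomputable def trigamma (x : ℝ) : ℝ := ∑' n : ℕ, 1 / (x + n) ^ 2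

section Digamma

variable {x y : ℝ}

lemma hasDerivAt_log_Gamma (hx : 0 < x) : HasDerivAt (log ∘ Gamma) (digamma x) x :=
  (differentiableAt_Gamma fun m => ((neg_nonpos.2 m.cast_nonneg).trans_lt hx).ne').hasDerivAt.log
    (Gamma_pos_of_pos hx).ne'

lemma log_Gamma_add_one (hx : 0 < x) : log (Gamma (x + 1)) = log (Gamma x) + log x := by
  rw [Gamma_add_one hx.ne', log_mul hx.ne' (Gamma_pos_of_pos hx).ne', add_comm]

lemma slope_log_Gamma_add_one (hx : 0 < x) : slope (log ∘ Gamma) x (x + 1) = log x := by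
  simp [slope_def_field, log_Gamma_add_one hx]

lemma digamma_add_one (hx : 0 < x) : digamma (x + 1) = digamma x + 1 / x := by
  have hrec : (fun y => (log ∘ Gamma) (y + 1)) =ᶠ[𝓝 x] fun y => (log ∘ Gamma) y + log y := by
    filter_upwards [Ioi_mem_nhds hx] with y hy using log_Gamma_add_one hy
  have hleft := (hasDerivAt_log_Gamma (add_pos hx one_pos)).comp_add_const x 1
  have hright := (hasDerivAt_log_Gamma hx).add (hasDerivAt_log hx.ne')
  rw [one_div]
  exact hleft.unique (hright.congr_of_eventuallyEq hrec)

lemma digamma_add_natCast (hx : 0 < x) (n : ℕ) :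
    digamma (x + n) = digamma x + ∑ i ∈ Finset.range n, 1 / (x + i) := by
  induction n with
  | zero => simp
  | succ n ih =>
    rw [Finset.sum_range_succ, ← add_assoc, ← ih, Nat.cast_succ, ← add_assoc,
      digamma_add_one (by positivity)]

lemma digamma_le_log (hx : 0 < x) : digamma x ≤ log x := by
  rw [← slope_log_Gamma_add_one hx]
  exact convexOn_log_Gamma.le_slope_of_hasDerivAt hx (add_pos hx one_pos) (lt_add_one x)
    (hasDerivAt_log_Gamma hx)

lemma log_le_digamma_add_one (hx : 0 < x) : log x ≤ digamma (x + 1) := by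
  rw [← slope_log_Gamma_add_one hx]
  exact convexOn_log_Gamma.slope_le_of_hasDerivAt hx (add_pos hx one_pos) (lt_add_one x)
    (hasDerivAt_log_Gamma (add_pos hx one_pos))

lemma tendsto_digamma_sub_log : Tendsto (fun x => digamma x - log x) atTop (𝓝 0) := by
  have hlower : Tendsto (fun x : ℝ => -x⁻¹) atTop (𝓝 0) := by
    simpa using tendsto_inv_atTop_zero (𝕜 := ℝ).neg
  refine tendsto_of_tendsto_of_tendsto_of_le_of_le' hlower tendsto_const_nhds ?_ ?_
  · filter_upwards [eventually_gt_atTop 0] with x hx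
    have h := log_le_digamma_add_one hx
    rw [digamma_add_one hx, one_div] at h
    linarith
  · filter_upwards [eventually_gt_atTop 0] with x hx using sub_nonpos.2 (digamma_le_log hx)

lemma tendsto_digamma_add_sub_digamma_add (s t : ℝ) :
    Tendsto (fun x => digamma (x + t) - digamma (x + s)) atTop (𝓝 0) := by
  have hshift (c : ℝ) : Tendsto (fun x => digamma (x + c) - log x) atTop (𝓝 0) := by
    have h := (tendsto_digamma_sub_log.comp (tendsto_atTop_add_const_right atTop c tendsto_id)).add
      (tendsto_log_comp_add_sub_log c)
    rw [add_zero] at h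
    exact h.congr fun x => sub_add_sub_cancel _ _ _
  have h := (hshift t).sub (hshift s)
  rw [sub_zero] at h
  exact h.congr fun x => sub_sub_sub_cancel_right _ _ _

lemma hasSum_one_div_sub_one_div (hx : 0 < x) (hy : 0 < y) :
    HasSum (fun n : ℕ => 1 / (x + n) - 1 / (y + n)) (digamma y - digamma x) := by
  wlog hxy : x ≤ y generalizing x y
  · simpa using (this hy hx (le_of_not_ge hxy)).neg
  have hnonneg (n : ℕ) : 0 ≤ 1 / (x + n) - 1 / (y + n) := sub_nonneg.2 (by gcongr)
  rw [hasSum_iff_tendsto_nat_of_nonneg hnonneg]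
  have htail : Tendsto (fun n : ℕ => digamma (y + n) - digamma (x + n)) atTop (𝓝 0) := by
    simpa only [Function.comp_def, add_comm] using
      (tendsto_digamma_add_sub_digamma_add x y).comp tendsto_natCast_atTop_atTop
  have h := htail.const_sub (digamma y - digamma x)
  rw [sub_zero] at h
  refine h.congr fun n => ?_
  rw [Finset.sum_sub_distrib, digamma_add_natCast hx, digamma_add_natCast hy]
  ring

lemma summable_one_div_add_natCast_sq (x : ℝ) : Summable fun n : ℕ => 1 / (x + n) ^ 2 := by
  simpa [add_comm] using (summable_one_div_nat_add_rpow x 2).2 one_lt_two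

lemma trigamma_add_one (x : ℝ) : trigamma (x + 1) = trigamma x - 1 / x ^ 2 := by
  rw [trigamma, trigamma, (summable_one_div_add_natCast_sq x).tsum_eq_zero_add]
  simp [add_assoc, add_comm (1 : ℝ)]

lemma tendsto_trigamma : Tendsto trigamma atTop (𝓝 0) := by
  have hterm (n : ℕ) : Tendsto (fun x : ℝ => 1 / (x + n) ^ 2) atTop (𝓝 0) := by
    have h := (tendsto_pow_atTop two_ne_zero).comp
      (tendsto_atTop_add_const_right atTop (n : ℝ) tendsto_id)
    simpa only [one_div] using! tendsto_inv_atTop_zero.comp h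
  rw [← tsum_zero (α := ℝ) (β := ℕ)]
  refine tendsto_tsum_of_dominated_convergence (summable_one_div_add_natCast_sq 1) hterm ?_
  filter_upwards [eventually_ge_atTop 1] with x hx n
  rw [norm_of_nonneg (by positivity)]
  gcongr

lemma hasDerivAt_digamma (hx : 0 < x) : HasDerivAt digamma (trigamma x) x := by
  obtain ⟨c, hc, hcx⟩ := exists_between hx
  have hseries : HasDerivAt (fun y => ∑' n : ℕ, (1 / (c + n) - 1 / (y + n))) (trigamma x) x := by
    refine hasDerivAt_tsum_of_isPreconnected
      (g := fun (n : ℕ) y => 1 / (c + n) - 1 / (y + n)) (g' := fun n y => 1 / (y + n) ^ 2)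
      (summable_one_div_add_natCast_sq c) isOpen_Ioi isPreconnected_Ioi (fun n y hy => ?_)
      (fun n y hy => ?_) hcx (hasSum_one_div_sub_one_div hc hx).summable hcx
    · have hyn : y + n ≠ 0 := (add_pos_of_pos_of_nonneg (hc.trans hy) n.cast_nonneg).ne'
      simpa [neg_div] using
        (((hasDerivAt_id y).add_const (n : ℝ)).fun_inv hyn).const_sub (1 / (c + n))
    · rw [norm_of_nonneg (by positivity)]
      have hcy : c ≤ y := le_of_lt hy
      gcongr
  refine (hseries.add_const (digamma c)).congr_of_eventuallyEq ?_
  filter_upwards [Ioi_mem_nhds hx] with y hy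
  rw [(hasSum_one_div_sub_one_div hc hy).tsum_eq, sub_add_cancel]

end Digamma

section Slope

variable {u v : ℝ}

lemma slope_digamma_add_one (hu : 0 < u) (hv : 0 < v) (huv : u ≠ v) :
    slope digamma (u + 1) (v + 1) = slope digamma u v - 1 / (u * v) := by
  have hvu : v - u ≠ 0 := sub_ne_zero.2 huv.symm
  rw [slope_def_field, slope_def_field, digamma_add_one hu, digamma_add_one hv,
    add_sub_add_right_eq_sub]
  field_simp
  ring

lemma slope_trigamma_add_one (hu : u ≠ 0) (hv : v ≠ 0) (huv : u ≠ v) :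
    slope trigamma (u + 1) (v + 1) = slope trigamma u v + (u + v) / (u * v) ^ 2 := by
  have hvu : v - u ≠ 0 := sub_ne_zero.2 huv.symm
  rw [slope_def_field, slope_def_field, trigamma_add_one, trigamma_add_one,
    add_sub_add_right_eq_sub]
  field_simp
  ring

lemma tendsto_slope_digamma_add (u v : ℝ) :
    Tendsto (fun x => slope digamma (x + u) (x + v)) atTop (𝓝 0) := by
  simp only [slope_def_field, add_sub_add_left_eq_sub]
  simpa using (tendsto_digamma_add_sub_digamma_add u v).div_const (v - u)

lemma tendsto_slope_trigamma_add (u v : ℝ) :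
    Tendsto (fun x => slope trigamma (x + u) (x + v)) atTop (𝓝 0) := by
  have hshift (c : ℝ) : Tendsto (fun x => trigamma (x + c)) atTop (𝓝 0) :=
    tendsto_trigamma.comp (tendsto_atTop_add_const_right atTop c tendsto_id)
  simp only [slope_def_field, add_sub_add_left_eq_sub]
  simpa using ((hshift v).sub (hshift u)).div_const (v - u)

lemma tendsto_add_add_one_div_mul (u v : ℝ) :
    Tendsto (fun x : ℝ => (x + u + (x + v) + 1) / ((x + u) * (x + v))) atTop (𝓝 0) := by
  have hinv (c : ℝ) : Tendsto (fun x : ℝ => (x + c)⁻¹) atTop (𝓝 0) :=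
    tendsto_inv_atTop_zero.comp (tendsto_atTop_add_const_right atTop c tendsto_id)
  have h := ((hinv u).add (hinv v)).add ((hinv u).mul (hinv v))
  rw [add_zero, mul_zero, add_zero] at h
  refine h.congr' ?_
  filter_upwards [eventually_gt_atTop (-u), eventually_gt_atTop (-v)] with x hxu hxv
  have hu : x + u ≠ 0 := by linarith
  have hv : x + v ≠ 0 := by linarith
  field_simp
  ring

lemma one_sub_sq_mul_two_mul_slope_digamma_sub_pos (hu : 0 < u) (hv : 0 < v) (huv : u ≠ v)
    (hsq : (v - u) ^ 2 ≠ 1) :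
    0 < (1 - (v - u) ^ 2) * (2 * slope digamma u v - (u + v + 1) / (u * v)) := by
  have hκ : 0 < (1 - (v - u) ^ 2) ^ 2 := sq_pos_of_ne_zero (sub_ne_zero.2 hsq.symm)
  have hlim := (((tendsto_slope_digamma_add u v).const_mul 2).sub
    (tendsto_add_add_one_div_mul u v)).const_mul (1 - (v - u) ^ 2)
  rw [mul_zero, sub_zero, mul_zero] at hlim
  have hpos := lt_of_tendsto_of_add_one_lt (x := 0) (fun x hx => ?_) hlim
  · simpa only [zero_add] using hpos
  have hp : 0 < x + u := by positivity
  have hq : 0 < x + v := by positivity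
  have hvu : v - u = x + v - (x + u) := (add_sub_add_left_eq_sub _ _ _).symm
  have hpq : x + u ≠ x + v := by simpa using huv
  rw [add_right_comm x 1 u, add_right_comm x 1 v, slope_digamma_add_one hp hq hpq]
  rw [hvu] at hκ ⊢
  generalize x + u = p, x + v = q at *
  rw [← sub_pos]
  calc 0 < (1 - (q - p) ^ 2) ^ 2 / (p * q * ((p + 1) * (q + 1))) := by positivity
    _ = (1 - (q - p) ^ 2) * (2 * slope digamma p q - (p + q + 1) / (p * q)) -
        (1 - (q - p) ^ 2) * (2 * (slope digamma p q - 1 / (p * q)) -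
          (p + 1 + (q + 1) + 1) / ((p + 1) * (q + 1))) := by
      field_simp
      ring

lemma one_sub_sq_mul_slope_digamma_sq_add_slope_trigamma_pos (hu : 0 < u) (hv : 0 < v)
    (huv : u ≠ v) (hsq : (v - u) ^ 2 ≠ 1) :
    0 < (1 - (v - u) ^ 2) * (slope digamma u v ^ 2 + slope trigamma u v) := by
  have hlim := (((tendsto_slope_digamma_add u v).pow 2).add
    (tendsto_slope_trigamma_add u v)).const_mul (1 - (v - u) ^ 2)
  rw [zero_pow two_ne_zero, add_zero, mul_zero] at hlim
  have hpos := lt_of_tendsto_of_add_one_lt (x := 0) (fun x hx => ?_) hlim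
  · simpa only [zero_add] using hpos
  have hp : 0 < x + u := by positivity
  have hq : 0 < x + v := by positivity
  have hvu : v - u = x + v - (x + u) := (add_sub_add_left_eq_sub _ _ _).symm
  have hpq : x + u ≠ x + v := by simpa using huv
  rw [add_right_comm x 1 u, add_right_comm x 1 v, slope_digamma_add_one hp hq hpq,
    slope_trigamma_add_one hp.ne' hq.ne' hpq]
  rw [hvu] at hsq ⊢
  have hfactor := one_sub_sq_mul_two_mul_slope_digamma_sub_pos hp hq hpq hsq
  generalize x + u = p, x + v = q at *
  rw [← sub_pos]
  calc 0 < (1 - (q - p) ^ 2) * (2 * slope digamma p q - (p + q + 1) / (p * q)) / (p * q) := by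
        positivity
    _ = (1 - (q - p) ^ 2) * (slope digamma p q ^ 2 + slope trigamma p q) -
        (1 - (q - p) ^ 2) * ((slope digamma p q - 1 / (p * q)) ^ 2 +
          (slope trigamma p q + (p + q) / (p * q) ^ 2)) := by
      field_simp
      ring

lemma slope_log_Gamma_le_log_min (hu : 0 < u) (hv : 0 < v) (huv : u ≠ v) (h : |v - u| ≤ 1) :
    slope (log ∘ Gamma) u v ≤ log (min u v) := by
  wlog hlt : u < v generalizing u v
  · rw [slope_comm, min_comm]
    exact this hv hu huv.symm (abs_sub_comm v u ▸ h) (huv.symm.lt_of_le (not_lt.1 hlt))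
  rw [min_eq_left hlt.le, ← slope_log_Gamma_add_one hu]
  refine convexOn_log_Gamma.slope_mono hu ⟨hv, huv.symm⟩ ⟨add_pos hu one_pos, by simp⟩ ?_
  linarith [le_of_abs_le h]

lemma log_min_le_slope_log_Gamma (hu : 0 < u) (hv : 0 < v) (h : 1 ≤ |v - u|) :
    log (min u v) ≤ slope (log ∘ Gamma) u v := by
  wlog hle : u ≤ v generalizing u v
  · rw [slope_comm, min_comm]
    exact this hv hu (abs_sub_comm v u ▸ h) (le_of_not_ge hle)
  rw [abs_of_nonneg (sub_nonneg.2 hle)] at h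
  rw [min_eq_left hle, ← slope_log_Gamma_add_one hu]
  refine convexOn_log_Gamma.slope_mono hu ⟨add_pos hu one_pos, by simp⟩ ⟨hv, ?_⟩ (by linarith)
  exact (by linarith : u < v).ne'

end Slope

/-- The function `x ↦ (Γ(x+t)/Γ(x+s))^{1/(t-s)}`, that is, `z_{s,t}(x) + x`. -/
noncomputable def gammaRatioRoot (s t x : ℝ) : ℝ := (Gamma (x + t) / Gamma (x + s)) ^ (1 / (t - s))

section GammaRatioRoot

variable {s t x : ℝ}

lemma neg_min_lt_iff : -(min s t) < x ↔ 0 < x + s ∧ 0 < x + t := by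
  rw [neg_lt_iff_pos_add, ← min_add_add_left, lt_min_iff]

lemma gammaRatioRoot_eq_exp_slope (hs : 0 < x + s) (ht : 0 < x + t) :
    gammaRatioRoot s t x = exp (slope (log ∘ Gamma) (x + s) (x + t)) := by
  have hΓs := Gamma_pos_of_pos hs
  have hΓt := Gamma_pos_of_pos ht
  rw [gammaRatioRoot, rpow_def_of_pos (div_pos hΓt hΓs), log_div hΓt.ne' hΓs.ne', mul_one_div,
    slope_def_field, add_sub_add_left_eq_sub]
  rfl

lemma hasDerivAt_gammaRatioRoot (hs : 0 < x + s) (ht : 0 < x + t) :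
    HasDerivAt (gammaRatioRoot s t)
      (gammaRatioRoot s t x * slope digamma (x + s) (x + t)) x := by
  have hexp := (hasDerivAt_slope_add (hasDerivAt_log_Gamma hs) (hasDerivAt_log_Gamma ht)).exp
  rw [gammaRatioRoot_eq_exp_slope hs ht]
  refine hexp.congr_of_eventuallyEq ?_
  filter_upwards [Ioi_mem_nhds (neg_min_lt_iff.2 ⟨hs, ht⟩)] with y hy
  exact gammaRatioRoot_eq_exp_slope (neg_min_lt_iff.1 hy).1 (neg_min_lt_iff.1 hy).2

lemma hasDerivAt_gammaRatioRoot_mul_slope_digamma (hs : 0 < x + s) (ht : 0 < x + t) :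
    HasDerivAt (fun y => gammaRatioRoot s t y * slope digamma (y + s) (y + t))
      (gammaRatioRoot s t x *
        (slope digamma (x + s) (x + t) ^ 2 + slope trigamma (x + s) (x + t))) x := by
  refine ((hasDerivAt_gammaRatioRoot hs ht).mul
    (hasDerivAt_slope_add (hasDerivAt_digamma hs) (hasDerivAt_digamma ht))).congr_deriv ?_
  ring

lemma gammaRatioRoot_pos (hs : 0 < x + s) (ht : 0 < x + t) : 0 < gammaRatioRoot s t x :=
  rpow_pos_of_pos (div_pos (Gamma_pos_of_pos ht) (Gamma_pos_of_pos hs)) _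

lemma strictConvexOn_gammaRatioRoot (hst : s ≠ t) (h : |t - s| < 1) :
    StrictConvexOn ℝ (Ioi (-(min s t))) (gammaRatioRoot s t) := by
  have hsq : (t - s) ^ 2 < 1 := (sq_lt_one_iff_abs_lt_one _).2 h
  refine strictConvexOn_of_hasDerivAt2_pos (convex_Ioi _) isOpen_Ioi
    (fun x hx => hasDerivAt_gammaRatioRoot (neg_min_lt_iff.1 hx).1 (neg_min_lt_iff.1 hx).2)
    (fun x hx => hasDerivAt_gammaRatioRoot_mul_slope_digamma (neg_min_lt_iff.1 hx).1
      (neg_min_lt_iff.1 hx).2) fun x hx => ?_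
  obtain ⟨hs, ht⟩ := neg_min_lt_iff.1 hx
  rw [← add_sub_add_left_eq_sub t s x] at hsq
  exact mul_pos (gammaRatioRoot_pos hs ht) <| pos_of_mul_pos_right
    (one_sub_sq_mul_slope_digamma_sq_add_slope_trigamma_pos hs ht (by simpa using hst) hsq.ne)
    (sub_nonneg.2 hsq.le)

lemma strictConcaveOn_gammaRatioRoot (h : 1 < |t - s|) :
    StrictConcaveOn ℝ (Ioi (-(min s t))) (gammaRatioRoot s t) := by
  have hst : s ≠ t := by
    rintro rfl
    norm_num at h
  have hsq : 1 < (t - s) ^ 2 := (one_lt_sq_iff_one_lt_abs _).2 h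
  refine strictConcaveOn_of_hasDerivAt2_neg (convex_Ioi _) isOpen_Ioi
    (fun x hx => hasDerivAt_gammaRatioRoot (neg_min_lt_iff.1 hx).1 (neg_min_lt_iff.1 hx).2)
    (fun x hx => hasDerivAt_gammaRatioRoot_mul_slope_digamma (neg_min_lt_iff.1 hx).1
      (neg_min_lt_iff.1 hx).2) fun x hx => ?_
  obtain ⟨hs, ht⟩ := neg_min_lt_iff.1 hx
  rw [← add_sub_add_left_eq_sub t s x] at hsq
  exact mul_neg_of_pos_of_neg (gammaRatioRoot_pos hs ht) <| neg_of_mul_pos_right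
    (one_sub_sq_mul_slope_digamma_sq_add_slope_trigamma_pos hs ht (by simpa using hst) hsq.ne')
    (sub_nonpos.2 hsq.le)

lemma gammaRatioRoot_le_min (hst : s ≠ t) (h : |t - s| ≤ 1) (hs : 0 < x + s) (ht : 0 < x + t) :
    gammaRatioRoot s t x ≤ min (x + s) (x + t) := by
  rw [gammaRatioRoot_eq_exp_slope hs ht, ← le_log_iff_exp_le (lt_min hs ht)]
  exact slope_log_Gamma_le_log_min hs ht (by simpa using hst) (by simpa using h)

lemma min_le_gammaRatioRoot (h : 1 ≤ |t - s|) (hs : 0 < x + s) (ht : 0 < x + t) :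
    min (x + s) (x + t) ≤ gammaRatioRoot s t x := by
  rw [gammaRatioRoot_eq_exp_slope hs ht, ← log_le_iff_le_exp (lt_min hs ht)]
  exact log_min_le_slope_log_Gamma hs ht (by simpa using h)

lemma bddAbove_gammaRatioRoot_sub_id (hst : s ≠ t) (h : |t - s| ≤ 1) :
    BddAbove ((fun x => gammaRatioRoot s t x - x) '' Ioi (-(min s t))) := by
  refine ⟨min s t, forall_mem_image.2 fun x hx => ?_⟩
  obtain ⟨hs, ht⟩ := neg_min_lt_iff.1 hx
  rw [sub_le_iff_le_add', ← min_add_add_left]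
  exact gammaRatioRoot_le_min hst h hs ht

lemma bddBelow_gammaRatioRoot_sub_id (h : 1 ≤ |t - s|) :
    BddBelow ((fun x => gammaRatioRoot s t x - x) '' Ioi (-(min s t))) := by
  refine ⟨min s t, forall_mem_image.2 fun x hx => ?_⟩
  obtain ⟨hs, ht⟩ := neg_min_lt_iff.1 hx
  rw [le_sub_iff_add_le', ← min_add_add_left]
  exact min_le_gammaRatioRoot h hs ht

end GammaRatioRoot

end

/-- Elezović–Giordano–Pečarić's theorem: the function
`z_{s,t}(x) = (Γ(x+t)/Γ(x+s))^{1/(t-s)} - x` is convex and decreasing on `(-min{s,t}, ∞)`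
when `0 < |t-s| < 1`, and concave and increasing there when `|t-s| > 1`. -/
theorem elezovic_giordano_pecaric (s t : ℝ) (hst : s ≠ t) :
    (|t - s| < 1 →
      ConvexOn ℝ (Set.Ioi (-(min s t)))
          (fun x : ℝ => (Gamma (x + t) / Gamma (x + s)) ^ (1 / (t - s)) - x) ∧
        StrictAntiOn (fun x : ℝ => (Gamma (x + t) / Gamma (x + s)) ^ (1 / (t - s)) - x)
          (Set.Ioi (-(min s t)))) ∧
    (1 < |t - s| →
      ConcaveOn ℝ (Set.Ioi (-(min s t)))
          (fun x : ℝ => (Gamma (x + t) / Gamma (x + s)) ^ (1 / (t - s)) - x) ∧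
        StrictMonoOn (fun x : ℝ => (Gamma (x + t) / Gamma (x + s)) ^ (1 / (t - s)) - x)
          (Set.Ioi (-(min s t)))) := by
  refine ⟨fun h => ?_, fun h => ?_⟩
  · have hconvex : StrictConvexOn ℝ (Set.Ioi (-(min s t))) fun x => gammaRatioRoot s t x - x :=
      (strictConvexOn_gammaRatioRoot hst h).sub_concaveOn (concaveOn_id (convex_Ioi _))
    exact ⟨hconvex.convexOn, strictAntiOn_of_strictConvexOn_of_bddAbove (isUpperSet_Ioi _) hconvex
      (bddAbove_gammaRatioRoot_sub_id hst h.le)⟩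
  · have hconcave : StrictConcaveOn ℝ (Set.Ioi (-(min s t))) fun x => gammaRatioRoot s t x - x :=
      (strictConcaveOn_gammaRatioRoot h).sub_convexOn (convexOn_id (convex_Ioi _))
    exact ⟨hconcave.concaveOn, strictMonoOn_of_strictConcaveOn_of_bddBelow (isUpperSet_Ioi _)
      hconcave (bddBelow_gammaRatioRoot_sub_id h.le)⟩
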